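/- The diagonal second partial derivative ∂²π_ε/∂h_+² = (e^ε/Z)(cosh(h_+) − e^ε sinh²(h_+)/Z) is strictly positive for all (h_+, h_-) ∈ ℝ², where Z = e^ε cosh(h_+) + e^{-ε} cosh(h_-). -/

import Mathlib

noncomputable def piE (ε h₁ h₂ : ℝ) : ℝ :=
  Real.log (2 * (Real.exp ε * Real.cosh h₁ + Real.exp (-ε) * Real.cosh h₂))

theorem piE_second_deriv_plus_pos (ε h₁ h₂ : ℝ)
    (Z : ℝ) (hZ : Z = Real.exp ε * Real.cosh h₁ + Real.exp (-ε) * Real.cosh h₂) :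
    deriv (fun x => deriv (fun x' => piE ε x' h₂) x) h₁ =
      (Real.exp ε / Z) * (Real.cosh h₁ - Real.exp ε * Real.sinh h₁ ^ 2 / Z) ∧
      0 < deriv (fun x => deriv (fun x' => piE ε x' h₂) x) h₁ := by
  have hpos : ∀ x, 0 < Real.exp ε * Real.cosh x + Real.exp (-ε) * Real.cosh h₂ := fun x => by
    have h1 := Real.cosh_pos x
    have h2 := Real.cosh_pos h₂
    positivity
  have hd : ∀ x, HasDerivAt (fun x => Real.exp ε * Real.cosh x + Real.exp (-ε) * Real.cosh h₂)
      (Real.exp ε * Real.sinh x) x := fun x =>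
    ((Real.hasDerivAt_cosh x).const_mul _).add_const _
  have h1 : (fun x => deriv (fun x' => piE ε x' h₂) x) = fun x =>
      (Real.exp ε * Real.sinh x) / (Real.exp ε * Real.cosh x + Real.exp (-ε) * Real.cosh h₂) := by
    funext x
    have hx := (((hd x).const_mul 2).log (by have := hpos x; positivity)).deriv
    have hne := (hpos x).ne'
    unfold piE
    rw [hx]
    exact mul_div_mul_left _ _ two_ne_zero
  have hZp : 0 < Z := hZ ▸ hpos h₁
  have h2 : deriv (fun x => deriv (fun x' => piE ε x' h₂) x) h₁ =
      (Real.exp ε / Z) * (Real.cosh h₁ - Real.exp ε * Real.sinh h₁ ^ 2 / Z) := by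
    rw [h1, (((Real.hasDerivAt_sinh h₁).const_mul (Real.exp ε)).fun_div (hd h₁)
      (hpos h₁).ne').deriv, ← hZ]
    field_simp
  refine ⟨h2, ?_⟩
  rw [h2]
  refine mul_pos (div_pos (Real.exp_pos _) hZp) ?_
  rw [sub_pos, div_lt_iff₀ hZp, hZ, Real.sinh_sq]
  have e1 := Real.exp_pos ε
  have e2 := mul_pos (Real.cosh_pos h₁) (mul_pos (Real.exp_pos (-ε)) (Real.cosh_pos h₂))
  nlinarith
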